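/- Let M be a finite-dimensional (α,β)-Yetter-Drinfeld module. Then End(M)^op, the opposite algebra of End(M) (multiplication u•v = v∘u), with left H-action (h·u)(m) = β⁻¹(h₂)·u(β⁻¹(S⁻¹(h₁))·m) and right H-coaction determined by u₍₀₎(m) ⊗ u₍₁₎ = u(m₍₀₎)₍₀₎ ⊗ u(m₍₀₎)₍₁₎ S(m₍₁₎), is an algebra in _H𝒴𝒟^H. -/

import Mathlib

open TensorProduct

noncomputable section

namespace GYD

variable (k H : Type) [Field k] [Ring H] [HopfAlgebra k H]

/-- `φ` is a Hopf algebra automorphism of `H` (a linear equivalence which is both an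
algebra morphism and a coalgebra morphism). -/
def IsHopfAut (φ : H ≃ₗ[k] H) : Prop :=
  (∀ x y : H, φ (x * y) = φ x * φ y) ∧ (φ 1 = 1) ∧
  (∀ h : H, Coalgebra.comul (R := k) (φ h)
      = TensorProduct.map φ.toLinearMap φ.toLinearMap (Coalgebra.comul (R := k) h)) ∧
  (∀ h : H, Coalgebra.counit (R := k) (φ h) = Coalgebra.counit (R := k) h)

/-- `Sinv` is a two-sided inverse of the antipode of `H`. -/
def IsAntipodeInv (Sinv : H → H) : Prop :=
  (∀ h : H, HopfAlgebra.antipode (R := k) (Sinv h) = h) ∧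
  (∀ h : H, Sinv (HopfAlgebra.antipode (R := k) h) = h)

/-- The data `(act, coact)` makes `M` an `(α, β)`-Yetter-Drinfeld module over `H`:
`M` is a left `H`-module, a right `H`-comodule, and the compatibility
`(h·m)₍₀₎ ⊗ (h·m)₍₁₎ = h₂·m₍₀₎ ⊗ β(h₃) m₍₁₎ α(Sinv(h₁))` holds (expressed via
arbitrary finite representations of `(Δ ⊗ id)(Δ h)` and of `coact m`). -/
def IsYD (Sinv α β : H → H) {M : Type} [AddCommGroup M] [Module k M]
    (act : H →ₗ[k] M →ₗ[k] M) (coact : M →ₗ[k] M ⊗[k] H) : Prop :=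
  (∀ m : M, act 1 m = m) ∧
  (∀ (g h : H) (m : M), act (g * h) m = act g (act h m)) ∧
  (∀ m : M, LinearMap.rTensor H coact (coact m)
      = (TensorProduct.assoc k M H H).symm
          (LinearMap.lTensor M (Coalgebra.comul (R := k)) (coact m))) ∧
  (∀ m : M,
    TensorProduct.rid k M (LinearMap.lTensor M (Coalgebra.counit (R := k)) (coact m)) = m) ∧
  (∀ (h : H) (m : M) (s t : Finset ℕ) (a b c : ℕ → H) (m₀ : ℕ → M) (m₁ : ℕ → H),
    LinearMap.rTensor H (Coalgebra.comul (R := k)) (Coalgebra.comul (R := k) h)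
        = ∑ i ∈ s, (a i ⊗ₜ[k] b i) ⊗ₜ[k] c i →
    coact m = ∑ j ∈ t, m₀ j ⊗ₜ[k] m₁ j →
    coact (act h m) = ∑ i ∈ s, ∑ j ∈ t,
      act (b i) (m₀ j) ⊗ₜ[k] (β (c i) * m₁ j * α (Sinv (a i))))

/-- Characterization of the action `h · (m ⊗ n) = θ₁(h₁)·m ⊗ θ₂(h₂)·n` on `M ⊗ N`. -/
def TensorActChar (θ₁ θ₂ : H → H) {M N : Type} [AddCommGroup M] [Module k M]
    [AddCommGroup N] [Module k N]
    (actM : H →ₗ[k] M →ₗ[k] M) (actN : H →ₗ[k] N →ₗ[k] N)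
    (act : H →ₗ[k] (M ⊗[k] N) →ₗ[k] (M ⊗[k] N)) : Prop :=
  ∀ (h : H) (m : M) (n : N) (s : Finset ℕ) (p q : ℕ → H),
    Coalgebra.comul (R := k) h = ∑ i ∈ s, p i ⊗ₜ[k] q i →
    act h (m ⊗ₜ[k] n) = ∑ i ∈ s, actM (θ₁ (p i)) m ⊗ₜ[k] actN (θ₂ (q i)) n

/-- Characterization of the "type two" action `h · (m ⊗ n) = h₂·m ⊗ h₁·n` on `M ⊗ N`. -/
def TensorActCharTwo {M N : Type} [AddCommGroup M] [Module k M]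
    [AddCommGroup N] [Module k N]
    (actM : H →ₗ[k] M →ₗ[k] M) (actN : H →ₗ[k] N →ₗ[k] N)
    (act : H →ₗ[k] (M ⊗[k] N) →ₗ[k] (M ⊗[k] N)) : Prop :=
  ∀ (h : H) (m : M) (n : N) (s : Finset ℕ) (p q : ℕ → H),
    Coalgebra.comul (R := k) h = ∑ i ∈ s, p i ⊗ₜ[k] q i →
    act h (m ⊗ₜ[k] n) = ∑ i ∈ s, actM (q i) m ⊗ₜ[k] actN (p i) n

/-- Characterization of the coaction `m ⊗ n ↦ (m₍₀₎ ⊗ n₍₀₎) ⊗ n₍₁₎ m₍₁₎` on `M ⊗ N`. -/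
def TensorCoactChar {M N : Type} [AddCommGroup M] [Module k M]
    [AddCommGroup N] [Module k N]
    (coactM : M →ₗ[k] M ⊗[k] H) (coactN : N →ₗ[k] N ⊗[k] H)
    (coact : M ⊗[k] N →ₗ[k] (M ⊗[k] N) ⊗[k] H) : Prop :=
  ∀ (m : M) (n : N) (s t : Finset ℕ) (m₀ : ℕ → M) (m₁ : ℕ → H) (n₀ : ℕ → N) (n₁ : ℕ → H),
    coactM m = ∑ i ∈ s, m₀ i ⊗ₜ[k] m₁ i →
    coactN n = ∑ j ∈ t, n₀ j ⊗ₜ[k] n₁ j →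
    coact (m ⊗ₜ[k] n) = ∑ i ∈ s, ∑ j ∈ t, (m₀ i ⊗ₜ[k] n₀ j) ⊗ₜ[k] (n₁ j * m₁ i)

/-- Characterization of the "type two" coaction `m ⊗ n ↦ (m₍₀₎ ⊗ n₍₀₎) ⊗ m₍₁₎ n₍₁₎`. -/
def TensorCoactCharTwo {M N : Type} [AddCommGroup M] [Module k M]
    [AddCommGroup N] [Module k N]
    (coactM : M →ₗ[k] M ⊗[k] H) (coactN : N →ₗ[k] N ⊗[k] H)
    (coact : M ⊗[k] N →ₗ[k] (M ⊗[k] N) ⊗[k] H) : Prop :=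
  ∀ (m : M) (n : N) (s t : Finset ℕ) (m₀ : ℕ → M) (m₁ : ℕ → H) (n₀ : ℕ → N) (n₁ : ℕ → H),
    coactM m = ∑ i ∈ s, m₀ i ⊗ₜ[k] m₁ i →
    coactN n = ∑ j ∈ t, n₀ j ⊗ₜ[k] n₁ j →
    coact (m ⊗ₜ[k] n) = ∑ i ∈ s, ∑ j ∈ t, (m₀ i ⊗ₜ[k] n₀ j) ⊗ₜ[k] (m₁ i * n₁ j)

/-- Characterization of the action `(h · f)(m) = f (θ(h) · m)` on the dual space. -/
def DualActChar (θ : H → H) {M : Type} [AddCommGroup M] [Module k M]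
    (actM : H →ₗ[k] M →ₗ[k] M)
    (actD : H →ₗ[k] Module.Dual k M →ₗ[k] Module.Dual k M) : Prop :=
  ∀ (h : H) (f : Module.Dual k M) (m : M), actD h f m = f (actM (θ h) m)

/-- Characterization of the coaction `f₍₀₎(m) ⊗ f₍₁₎ = f(m₍₀₎) ⊗ σ(m₍₁₎)` on the dual space
(expressed through contraction against evaluation at each `m`). -/
def DualCoactChar (σ : H → H) {M : Type} [AddCommGroup M] [Module k M]
    (coactM : M →ₗ[k] M ⊗[k] H)
    (coactD : Module.Dual k M →ₗ[k] Module.Dual k M ⊗[k] H) : Prop :=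
  ∀ (f : Module.Dual k M) (m : M) (t : Finset ℕ) (m₀ : ℕ → M) (m₁ : ℕ → H),
    coactM m = ∑ j ∈ t, m₀ j ⊗ₜ[k] m₁ j →
    TensorProduct.lid k H (LinearMap.rTensor H (Module.Dual.eval k M m) (coactD f))
      = ∑ j ∈ t, f (m₀ j) • σ (m₁ j)

/-- Characterization of the action `(h · u)(m) = θ(h₁) · u (θ(S(h₂)) · m)` on `End(M)`. -/
def EndActChar (θ : H → H) {M : Type} [AddCommGroup M] [Module k M]
    (actM : H →ₗ[k] M →ₗ[k] M)
    (actE : H →ₗ[k] Module.End k M →ₗ[k] Module.End k M) : Prop :=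
  ∀ (h : H) (u : Module.End k M) (m : M) (s : Finset ℕ) (p q : ℕ → H),
    Coalgebra.comul (R := k) h = ∑ i ∈ s, p i ⊗ₜ[k] q i →
    actE h u m = ∑ i ∈ s,
      actM (θ (p i)) (u (actM (θ (HopfAlgebra.antipode (R := k) (q i))) m))

/-- Characterization of the coaction `u₍₀₎(m) ⊗ u₍₁₎ = u(m₍₀₎)₍₀₎ ⊗ Sinv(m₍₁₎) u(m₍₀₎)₍₁₎`
on `End(M)`, expressed through contraction against evaluation at each `m`. -/
def EndCoactChar (Sinv : H → H) {M : Type} [AddCommGroup M] [Module k M]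
    (coactM : M →ₗ[k] M ⊗[k] H)
    (coactE : Module.End k M →ₗ[k] Module.End k M ⊗[k] H) : Prop :=
  ∀ (u : Module.End k M) (m : M) (t : Finset ℕ) (m₀ : ℕ → M) (m₁ : ℕ → H)
    (r : ℕ → Finset ℕ) (n₀ : ℕ → ℕ → M) (n₁ : ℕ → ℕ → H),
    coactM m = ∑ j ∈ t, m₀ j ⊗ₜ[k] m₁ j →
    (∀ j ∈ t, coactM (u (m₀ j)) = ∑ l ∈ r j, n₀ j l ⊗ₜ[k] n₁ j l) →
    LinearMap.rTensor H (LinearMap.applyₗ (R := k) m) (coactE u)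
      = ∑ j ∈ t, ∑ l ∈ r j, n₀ j l ⊗ₜ[k] (Sinv (m₁ j) * n₁ j l)

/-- Characterization of the action `(h · u)(m) = θ(h₂) · u (θ(Sinv(h₁)) · m)` on `End(M)ᵒᵖ`. -/
def EndOpActChar (θ Sinv : H → H) {M : Type} [AddCommGroup M] [Module k M]
    (actM : H →ₗ[k] M →ₗ[k] M)
    (actE : H →ₗ[k] (Module.End k M)ᵐᵒᵖ →ₗ[k] (Module.End k M)ᵐᵒᵖ) : Prop :=
  ∀ (h : H) (u : (Module.End k M)ᵐᵒᵖ) (m : M) (s : Finset ℕ) (p q : ℕ → H),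
    Coalgebra.comul (R := k) h = ∑ i ∈ s, p i ⊗ₜ[k] q i →
    (actE h u).unop m = ∑ i ∈ s,
      actM (θ (q i)) (u.unop (actM (θ (Sinv (p i))) m))

/-- Characterization of the coaction `u₍₀₎(m) ⊗ u₍₁₎ = u(m₍₀₎)₍₀₎ ⊗ u(m₍₀₎)₍₁₎ S(m₍₁₎)`
on `End(M)ᵒᵖ`, expressed through contraction against evaluation at each `m`. -/
def EndOpCoactChar {M : Type} [AddCommGroup M] [Module k M]
    (coactM : M →ₗ[k] M ⊗[k] H)
    (coactE : (Module.End k M)ᵐᵒᵖ →ₗ[k] (Module.End k M)ᵐᵒᵖ ⊗[k] H) : Prop :=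
  ∀ (u : (Module.End k M)ᵐᵒᵖ) (m : M) (t : Finset ℕ) (m₀ : ℕ → M) (m₁ : ℕ → H)
    (r : ℕ → Finset ℕ) (n₀ : ℕ → ℕ → M) (n₁ : ℕ → ℕ → H),
    coactM m = ∑ j ∈ t, m₀ j ⊗ₜ[k] m₁ j →
    (∀ j ∈ t, coactM (u.unop (m₀ j)) = ∑ l ∈ r j, n₀ j l ⊗ₜ[k] n₁ j l) →
    LinearMap.rTensor H ((LinearMap.applyₗ (R := k) m).comp
        (MulOpposite.opLinearEquiv k).symm.toLinearMap) (coactE u)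
      = ∑ j ∈ t, ∑ l ∈ r j,
          n₀ j l ⊗ₜ[k] (n₁ j l * HopfAlgebra.antipode (R := k) (m₁ j))

/-- `A`, with the Yetter-Drinfeld structure `(act, coact)`, is an algebra in the braided
category of Yetter-Drinfeld modules over `H`. -/
def IsYDAlgebra (Sinv : H → H) {A : Type} [Ring A] [Algebra k A]
    (act : H →ₗ[k] A →ₗ[k] A) (coact : A →ₗ[k] A ⊗[k] H) : Prop :=
  IsYD k H Sinv id id act coact ∧
  (∀ (h : H) (a b : A) (s : Finset ℕ) (p q : ℕ → H),
    Coalgebra.comul (R := k) h = ∑ i ∈ s, p i ⊗ₜ[k] q i →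
    act h (a * b) = ∑ i ∈ s, act (p i) a * act (q i) b) ∧
  (∀ h : H, act h 1 = Coalgebra.counit (R := k) h • (1 : A)) ∧
  (coact 1 = (1 : A) ⊗ₜ[k] (1 : H)) ∧
  (∀ (a b : A) (s t : Finset ℕ) (a₀ : ℕ → A) (a₁ : ℕ → H) (b₀ : ℕ → A) (b₁ : ℕ → H),
    coact a = ∑ i ∈ s, a₀ i ⊗ₜ[k] a₁ i →
    coact b = ∑ j ∈ t, b₀ j ⊗ₜ[k] b₁ j →
    coact (a * b) = ∑ i ∈ s, ∑ j ∈ t, (a₀ i * b₀ j) ⊗ₜ[k] (b₁ j * a₁ i))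

/-- Characterization of the smash product multiplication
`(a # b)(a' # b') = a a'₍₀₎ # (a'₍₁₎ · b) b'` on `A ⊗ B`. -/
def SmashMulChar {A B : Type} [Ring A] [Algebra k A] [Ring B] [Algebra k B]
    (actB : H →ₗ[k] B →ₗ[k] B) (coactA : A →ₗ[k] A ⊗[k] H)
    (mul : (A ⊗[k] B) →ₗ[k] (A ⊗[k] B) →ₗ[k] (A ⊗[k] B)) : Prop :=
  ∀ (a a' : A) (b b' : B) (t : Finset ℕ) (a₀ : ℕ → A) (a₁ : ℕ → H),
    coactA a' = ∑ j ∈ t, a₀ j ⊗ₜ[k] a₁ j →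
    mul (a ⊗ₜ[k] b) (a' ⊗ₜ[k] b') = ∑ j ∈ t, (a * a₀ j) ⊗ₜ[k] (actB (a₁ j) b * b')

end GYD

/-! Replacing the action `h · m` by `β⁻¹(h) · m` turns an `(α, β)`-module into an
`(α ∘ β⁻¹, id)`-module with the same coaction and leads to the same structures on `End(M)ᵒᵖ`, so let
`β = id`.

Let `W` be the operator `m ⊗ x ↦ m₍₀₎ ⊗ m₍₁₎ x` on `M ⊗ H`, invertible because the antipode inverts
`id` under convolution. Letting `End(M)ᵒᵖ ⊗ H` act on `M ⊗ H` by `(u ⊗ q)(m ⊗ x) = u(m) ⊗ q x`,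
which is faithful, the coaction reads `u ↦ W (u ⊗ 1) W⁻¹`; it therefore respects products and the
unit. A coaction represents the convolution algebra of maps `H → Q` on `M ⊗ Q`, and applying this to
`Δ = (h ↦ h ⊗ 1) * (h ↦ 1 ⊗ h)` factors the operator built from `Δ` and gives coassociativity.

In the same way the action on `End(M)ᵒᵖ` is conjugation by `x : h ↦ (h · )` in the convolution
algebra of maps `H → End(M ⊗ H)ᵒᵖ`, and the coaction is conjugation by the constant `w` at `W`. With
`y(h)` left multiplication by `h` on the factor `H`, the compatibility condition of `M` says
`x w = t (w x y)`, where `t(h)` is left multiplication by `α(S⁻¹(h))`. As `t` commutes with `u ⊗ 1`,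
conjugating `u ⊗ 1` by `x w` or by `w x y` gives the same result, which is the compatibility
condition of `End(M)ᵒᵖ`, now without `α`.
-/

namespace GYD

open Coalgebra WithConv MulOpposite

section TensorSums

variable {R M N P : Type*} [CommSemiring R] [AddCommMonoid M] [Module R M]
  [AddCommMonoid N] [Module R N] [AddCommMonoid P] [Module R P]

theorem exists_finset_nat_tmul (x : M ⊗[R] N) :
    ∃ (s : Finset ℕ) (a : ℕ → M) (b : ℕ → N), x = ∑ i ∈ s, a i ⊗ₜ[R] b i := by
  obtain ⟨n, a, b, rfl⟩ := TensorProduct.exists_sum_tmul_eq x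
  refine ⟨Finset.range n, fun i ↦ if h : i < n then a ⟨i, h⟩ else 0,
    fun i ↦ if h : i < n then b ⟨i, h⟩ else 0, ?_⟩
  simp [Finset.sum_range]

theorem exists_finset_nat_tmul_tmul (x : (M ⊗[R] N) ⊗[R] P) :
    ∃ (s : Finset ℕ) (a : ℕ → M) (b : ℕ → N) (c : ℕ → P),
      x = ∑ i ∈ s, (a i ⊗ₜ[R] b i) ⊗ₜ[R] c i := by
  obtain ⟨s, y, c, rfl⟩ := exists_finset_nat_tmul x
  choose t a b hy using fun i ↦ exists_finset_nat_tmul (y i)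
  let pairing := (Equiv.sigmaEquivProd ℕ ℕ).trans Nat.pairEquiv
  refine ⟨(s.sigma t).map pairing.toEmbedding, fun n ↦ a n.unpair.1 n.unpair.2,
    fun n ↦ b n.unpair.1 n.unpair.2, fun n ↦ c n.unpair.1, ?_⟩
  simp [pairing, Finset.sum_sigma, hy, TensorProduct.sum_tmul]

end TensorSums

section Convolution

variable {R C B : Type*} [CommSemiring R] [AddCommMonoid C] [Module R C] [Coalgebra R C]
  [Semiring B] [Algebra R B]

theorem convMul_apply_of_comul_eq_sum {ι : Type*} {c : C} {s : Finset ι} {p q : ι → C}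
    (hc : comul c = ∑ i ∈ s, p i ⊗ₜ[R] q i) (f g : WithConv (C →ₗ[R] B)) :
    (f * g) c = ∑ i ∈ s, f (p i) * g (q i) :=
  Coalgebra.Repr.convMul_apply ⟨s, p, q, hc.symm⟩ f g

theorem convMul_convMul_apply_of_rTensor_comul_eq_sum {ι : Type*} {h : C} {s : Finset ι}
    {a b c : ι → C}
    (hh : comul.rTensor C (comul h) = ∑ i ∈ s, (a i ⊗ₜ[R] b i) ⊗ₜ[R] c i)
    (f g l : WithConv (C →ₗ[R] B)) :
    (f * g * l) h = ∑ i ∈ s, f (a i) * g (b i) * l (c i) := by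
  have map_comul : (f * g * l) h = LinearMap.mul' R B (TensorProduct.map
      (LinearMap.mul' R B ∘ₗ TensorProduct.map f.ofConv g.ofConv) l.ofConv
      (comul.rTensor C (comul h))) := by
    rw [← LinearMap.comp_apply (TensorProduct.map _ _), LinearMap.map_comp_rTensor]
    rfl
  simp [map_comul, hh]

theorem toConv_smulRight_counit_mul_apply (b : B) (f : WithConv (C →ₗ[R] B)) (c : C) :
    (toConv (counit.smulRight b) * f : WithConv (C →ₗ[R] B)) c = b * f c := by
  simpa [(ℛ R c).convMul_apply, Finset.mul_sum] using
    congr(b * f.ofConv $(sum_counit_smul (ℛ R c)))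

theorem mul_toConv_smulRight_counit_apply (b : B) (f : WithConv (C →ₗ[R] B)) (c : C) :
    (f * toConv (counit.smulRight b) : WithConv (C →ₗ[R] B)) c = f c * b := by
  have sum_smul_counit : ∑ i ∈ (ℛ R c).index, counit (R := R) ((ℛ R c).right i) •
      f.ofConv ((ℛ R c).left i) = f.ofConv c := by
    simpa only [map_sum, TensorProduct.rid_tmul, one_smul] using
      congrArg (TensorProduct.rid R B) (sum_map_tmul_counit_eq f.ofConv c (repr := ℛ R c))
  simpa [(ℛ R c).convMul_apply, Finset.sum_mul] using congrArg (· * b) sum_smul_counit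

variable (R C) in
/-- The constant elements of the convolution algebra of maps from a coalgebra `C` to an
algebra `B`: the element `b` is sent to `c ↦ ε(c) b`. -/
def convConst : B →+* WithConv (C →ₗ[R] B) where
  toFun b := toConv (counit.smulRight b)
  map_one' := by ext; simp [Algebra.algebraMap_eq_smul_one]
  map_mul' a b := by
    ext c
    have apply_mul := toConv_smulRight_counit_mul_apply a (toConv ((counit (R := R)).smulRight b)) c
    exact (mul_smul_comm (counit (R := R) c) a b).symm.trans apply_mul.symm
  map_zero' := by ext; simp
  map_add' a b := by ext; simp

theorem convConst_mul_apply (b : B) (f : WithConv (C →ₗ[R] B)) (c : C) :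
    (convConst R C b * f) c = b * f c :=
  toConv_smulRight_counit_mul_apply b f c

theorem mul_convConst_apply (b : B) (f : WithConv (C →ₗ[R] B)) (c : C) :
    (f * convConst R C b) c = f c * b :=
  mul_toConv_smulRight_counit_apply b f c

end Convolution

section ConvolutionUnits

variable {R H Q : Type*} [CommSemiring R] [Semiring H] [HopfAlgebra R H] [Semiring Q] [Algebra R Q]

/-- An algebra map `φ : H → Q` as a unit of the convolution algebra, with inverse `φ ∘ S`. -/
def convUnit (φ : H →ₐ[R] Q) : (WithConv (H →ₗ[R] Q))ˣ where
  val := toConv φ.toLinearMap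
  inv := toConv (φ.toLinearMap ∘ₗ HopfAlgebra.antipode R)
  val_inv := by
    ext h
    rw [(ℛ R h).convMul_apply]
    simpa [Algebra.algebraMap_eq_smul_one] using
      congrArg φ (HopfAlgebra.sum_mul_antipode_eq_smul (ℛ R h))
  inv_val := by
    ext h
    rw [(ℛ R h).convMul_apply]
    simpa [Algebra.algebraMap_eq_smul_one] using
      congrArg φ (HopfAlgebra.sum_antipode_mul_eq_smul (ℛ R h))

variable (R H) in
theorem convUnit_comulAlgHom :
    convUnit (Bialgebra.comulAlgHom R H) =
      convUnit Algebra.TensorProduct.includeLeft *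
        convUnit Algebra.TensorProduct.includeRight := by
  ext h
  simp only [Units.val_mul, convUnit, (ℛ R h).convMul_apply]
  simp [(ℛ R h).eq]

variable (R H) in
theorem convUnit_counitAlgHom : convUnit (Bialgebra.counitAlgHom R H) = 1 := by
  ext h
  simp [convUnit]

end ConvolutionUnits

section AntipodeInverse

variable {k H : Type} [Field k] [Ring H] [HopfAlgebra k H] {Sinv : H → H}

/-- The antipode as a linear equivalence whose inverse is the given `Sinv`. -/
def antipodeEquiv (hS : IsAntipodeInv k H Sinv) : H ≃ₗ[k] H where
  __ := HopfAlgebra.antipode k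
  invFun := Sinv
  left_inv := hS.2
  right_inv := hS.1

theorem antipodeEquiv_symm_apply (hS : IsAntipodeInv k H Sinv) (h : H) :
    (antipodeEquiv hS).symm h = Sinv h := rfl

theorem antipodeInv_mul (hS : IsAntipodeInv k H Sinv) (g h : H) :
    Sinv (g * h) = Sinv h * Sinv g :=
  (antipodeEquiv hS).injective <| by
    change HopfAlgebra.antipode k _ = HopfAlgebra.antipode k _
    rw [HopfAlgebra.antipode_mul_antidistrib, hS.1, hS.1, hS.1]

theorem antipodeInv_one (hS : IsAntipodeInv k H Sinv) : Sinv 1 = 1 := by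
  simpa only [HopfAlgebra.antipode_one] using hS.2 1

theorem sum_antipodeInv_mul_eq_smul (hS : IsAntipodeInv k H Sinv) {ι : Type*} {h : H}
    (r : Coalgebra.Repr k h ι) :
    ∑ i ∈ r.index, Sinv (r.right i) * r.left i = counit (R := k) h • 1 := by
  refine (antipodeEquiv hS).injective ?_
  change HopfAlgebra.antipode k _ = HopfAlgebra.antipode k _
  simpa [HopfAlgebra.antipode_mul_antidistrib, hS.1] using
    HopfAlgebra.sum_antipode_mul_eq_smul r

theorem sum_mul_antipodeInv_eq_smul (hS : IsAntipodeInv k H Sinv) {ι : Type*} {h : H}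
    (r : Coalgebra.Repr k h ι) :
    ∑ i ∈ r.index, r.right i * Sinv (r.left i) = counit (R := k) h • 1 := by
  refine (antipodeEquiv hS).injective ?_
  change HopfAlgebra.antipode k _ = HopfAlgebra.antipode k _
  simpa [HopfAlgebra.antipode_mul_antidistrib, hS.1] using
    HopfAlgebra.sum_mul_antipode_eq_smul r

variable {B : Type*} [Semiring B] [Algebra k B]

/-- An algebra map `F : H → B`, viewed as an antimultiplicative map to `Bᵐᵒᵖ`, as a unit of the
convolution algebra; its inverse is `F ∘ S⁻¹`. -/
def convOpUnit (hS : IsAntipodeInv k H Sinv) (F : H →ₐ[k] B) : (WithConv (H →ₗ[k] Bᵐᵒᵖ))ˣ where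
  val := toConv ((opLinearEquiv k).toLinearMap ∘ₗ F.toLinearMap)
  inv := toConv ((opLinearEquiv k).toLinearMap ∘ₗ F.toLinearMap ∘ₗ
    (antipodeEquiv hS).symm.toLinearMap)
  val_inv := by
    ext h
    have map_sum_inv := congrArg F (sum_antipodeInv_mul_eq_smul hS (ℛ k h))
    rw [(ℛ k h).convMul_apply]
    simpa [antipodeEquiv_symm_apply, ← op_mul, Algebra.algebraMap_eq_smul_one] using
      congrArg op map_sum_inv
  inv_val := by
    ext h
    rw [(ℛ k h).convMul_apply]
    have map_sum_inv := congrArg F (sum_mul_antipodeInv_eq_smul hS (ℛ k h))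
    simpa [antipodeEquiv_symm_apply, ← op_mul, Algebra.algebraMap_eq_smul_one] using
      congrArg op map_sum_inv

theorem val_convOpUnit_apply (hS : IsAntipodeInv k H Sinv) (F : H →ₐ[k] B) (h : H) :
    (convOpUnit hS F).val h = op (F h) := rfl

theorem val_inv_convOpUnit_apply (hS : IsAntipodeInv k H Sinv) (F : H →ₐ[k] B) (h : H) :
    (convOpUnit hS F)⁻¹.val h = op (F (Sinv h)) := rfl

end AntipodeInverse

section TensorOperators

variable {R M Q : Type*} [CommSemiring R] [AddCommMonoid M] [Module R M] [Semiring Q] [Algebra R Q]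

theorem end_eq_of_commute_mulRight {A B : Module.End R (M ⊗[R] Q)}
    (hA : ∀ x : Q, Commute A ((LinearMap.mulRight R x).lTensor M))
    (hB : ∀ x : Q, Commute B ((LinearMap.mulRight R x).lTensor M))
    (h : ∀ m : M, A (m ⊗ₜ 1) = B (m ⊗ₜ 1)) : A = B := by
  ext m x
  have apply_tmul (T : Module.End R (M ⊗[R] Q))
      (hT : Commute T ((LinearMap.mulRight R x).lTensor M)) :
      T (m ⊗ₜ x) = (LinearMap.mulRight R x).lTensor M (T (m ⊗ₜ 1)) := by
    simpa using congr($(hT.eq) (m ⊗ₜ 1))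
  simp [apply_tmul A (hA x), apply_tmul B (hB x), h m]

variable (R M) in
/-- Evaluation of endomorphisms at a vector, as a linear map on `End(M)ᵒᵖ`. -/
def evalOp (m : M) : (Module.End R M)ᵐᵒᵖ →ₗ[R] M :=
  (LinearMap.applyₗ (R := R) m).comp (opLinearEquiv R).symm.toLinearMap

theorem evalOp_apply (m : M) (u : (Module.End R M)ᵐᵒᵖ) : evalOp R M m u = u.unop m := rfl

variable (R M Q) in
/-- The action of `End(M)ᵒᵖ ⊗ Q` on `M ⊗ Q` in which `u ⊗ q` sends `m ⊗ x` to `u(m) ⊗ q x`.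
It reverses products in `End(M)ᵒᵖ` and preserves those in `Q`. -/
def opEndTensor : (Module.End R M)ᵐᵒᵖ ⊗[R] Q →ₗ[R] Module.End R (M ⊗[R] Q) :=
  TensorProduct.homTensorHomMap (.id R) M Q M Q ∘ₗ
    TensorProduct.map (opLinearEquiv R).symm.toLinearMap (LinearMap.mul R Q)

theorem opEndTensor_tmul (u : (Module.End R M)ᵐᵒᵖ) (q : Q) :
    opEndTensor R M Q (u ⊗ₜ q) = TensorProduct.map u.unop (LinearMap.mulLeft R q) := rfl

theorem opEndTensor_tmul_one (u : (Module.End R M)ᵐᵒᵖ) :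
    opEndTensor R M Q (u ⊗ₜ 1) = u.unop.rTensor Q := by
  rw [opEndTensor_tmul, LinearMap.mulLeft_one]
  rfl

theorem commute_opEndTensor_mulRight (X : (Module.End R M)ᵐᵒᵖ ⊗[R] Q) (x : Q) :
    Commute (opEndTensor R M Q X) ((LinearMap.mulRight R x).lTensor M) := by
  induction X with
  | zero => simp
  | add X Y hX hY => simpa only [map_add] using hX.add_left hY
  | tmul u q => ext; simp [opEndTensor_tmul, mul_assoc]

theorem opEndTensor_apply_tmul_one (X : (Module.End R M)ᵐᵒᵖ ⊗[R] Q) (m : M) :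
    opEndTensor R M Q X (m ⊗ₜ 1) = (evalOp R M m).rTensor Q X := by
  induction X with
  | zero => simp
  | add X Y hX hY => simp only [map_add, LinearMap.add_apply, hX, hY]
  | tmul u q => simp [opEndTensor_tmul, evalOp_apply]

theorem opEndTensor_lTensor_apply_tmul_one {Q' : Type*} [Semiring Q'] [Algebra R Q']
    (f : Q →ₗ[R] Q') (X : (Module.End R M)ᵐᵒᵖ ⊗[R] Q) (m : M) :
    opEndTensor R M Q' (f.lTensor _ X) (m ⊗ₜ 1) =
      f.lTensor M (opEndTensor R M Q X (m ⊗ₜ 1)) := by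
  induction X with
  | zero => simp
  | add X Y hX hY => simp only [map_add, LinearMap.add_apply, hX, hY]
  | tmul u q => simp [opEndTensor_tmul]

theorem unop_rid_apply (X : (Module.End R M)ᵐᵒᵖ ⊗[R] R) (m : M) :
    (TensorProduct.rid R _ X).unop m = TensorProduct.rid R M (opEndTensor R M R X (m ⊗ₜ 1)) := by
  induction X with
  | zero => simp
  | add X Y hX hY => simp only [map_add, unop_add, LinearMap.add_apply, hX, hY]
  | tmul u r => simp [opEndTensor_tmul]

theorem opEndTensor_injective [Module.Free R Q] : Function.Injective (opEndTensor R M Q) := by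
  classical
  intro X Y hXY
  let b := Module.Free.chooseBasis R Q
  refine (TensorProduct.equivFinsuppOfBasisRight b).injective (Finsupp.ext fun i ↦ ?_)
  refine unop_injective (LinearMap.ext fun m ↦ ?_)
  simp only [TensorProduct.equivFinsuppOfBasisRight_apply]
  simp only [unop_rid_apply, opEndTensor_lTensor_apply_tmul_one, hXY]

end TensorOperators

section Coaction

variable {R C M Q : Type*} [CommSemiring R] [AddCommMonoid C] [Module R C]
  [AddCommMonoid M] [Module R M] [Semiring Q] [Algebra R Q] (ρ : M →ₗ[R] M ⊗[R] C)

/-- The operator `m ⊗ x ↦ m₍₀₎ ⊗ f(m₍₁₎) x` on `M ⊗ Q`, for a linear map `f : C → Q` and a map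
`ρ : m ↦ m₍₀₎ ⊗ m₍₁₎`, in practice a coaction of a coalgebra `C` on `M`. -/
def coactEnd (f : C →ₗ[R] Q) : Module.End R (M ⊗[R] Q) :=
  (TensorProduct.lift (LinearMap.mul R Q ∘ₗ f)).lTensor M ∘ₗ
    (TensorProduct.assoc R M C Q).toLinearMap ∘ₗ ρ.rTensor Q

theorem coactEnd_tmul_of_eq_sum {ι : Type*} {m : M} {s : Finset ι} {m₀ : ι → M} {m₁ : ι → C}
    (hm : ρ m = ∑ i ∈ s, m₀ i ⊗ₜ[R] m₁ i) (f : C →ₗ[R] Q) (x : Q) :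
    coactEnd ρ f (m ⊗ₜ x) = ∑ i ∈ s, m₀ i ⊗ₜ (f (m₁ i) * x) := by
  simp [coactEnd, hm, TensorProduct.sum_tmul]

theorem coactEnd_tmul_one (f : C →ₗ[R] Q) (m : M) :
    coactEnd ρ f (m ⊗ₜ 1) = f.lTensor M (ρ m) := by
  obtain ⟨s, m₀, m₁, hm⟩ := exists_finset_nat_tmul (ρ m)
  simp [coactEnd_tmul_of_eq_sum ρ hm, hm]

theorem commute_coactEnd_mulRight (f : C →ₗ[R] Q) (x : Q) :
    Commute (coactEnd ρ f) ((LinearMap.mulRight R x).lTensor M) := by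
  ext m y
  obtain ⟨s, m₀, m₁, hm⟩ := exists_finset_nat_tmul (ρ m)
  simp [coactEnd_tmul_of_eq_sum ρ hm, mul_assoc]

theorem commute_coactEnd_mulLeft {f : C →ₗ[R] Q} {q : Q} (hq : ∀ c, Commute (f c) q) :
    Commute (coactEnd ρ f) ((LinearMap.mulLeft R q).lTensor M) := by
  ext m y
  obtain ⟨s, m₀, m₁, hm⟩ := exists_finset_nat_tmul (ρ m)
  simp [coactEnd_tmul_of_eq_sum ρ hm, (hq _).left_comm]

theorem coactEnd_lTensor (f g : C →ₗ[R] Q) (z : M ⊗[R] C) :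
    coactEnd ρ f (g.lTensor M z) = (LinearMap.mul' R Q ∘ₗ TensorProduct.map f g).lTensor M
      (TensorProduct.assoc R M C C (ρ.rTensor C z)) := by
  induction z with
  | zero => simp
  | add y z hy hz => simp only [map_add, hy, hz]
  | tmul m c =>
    obtain ⟨s, m₀, m₁, hm⟩ := exists_finset_nat_tmul (ρ m)
    simp [coactEnd_tmul_of_eq_sum ρ hm, hm, TensorProduct.sum_tmul]

variable [Coalgebra R C]

/-- The linear map `ρ` is a right coaction of the coalgebra `C` on `M`. -/
structure IsCoaction (ρ : M →ₗ[R] M ⊗[R] C) : Prop where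
  coassoc (m : M) : TensorProduct.assoc R M C C (ρ.rTensor C (ρ m)) = comul.lTensor M (ρ m)
  rid_lTensor_counit (m : M) : TensorProduct.rid R M (counit.lTensor M (ρ m)) = m

variable {ρ}

theorem IsCoaction.coactEnd_one (hρ : IsCoaction ρ) :
    coactEnd ρ (1 : WithConv (C →ₗ[R] Q)).ofConv = 1 := by
  refine end_eq_of_commute_mulRight (commute_coactEnd_mulRight ρ _) (fun x ↦ Commute.one_left _)
    fun m ↦ ?_
  have lTensor_counit : counit.lTensor M (ρ m) = m ⊗ₜ (1 : R) :=
    (TensorProduct.rid R M).injective <| by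
      rw [hρ.rid_lTensor_counit, TensorProduct.rid_tmul, one_smul]
  rw [coactEnd_tmul_one, LinearMap.convOne_def, ofConv_toConv, LinearMap.lTensor_comp_apply,
    lTensor_counit]
  simp

theorem IsCoaction.coactEnd_mul (hρ : IsCoaction ρ) (f g : WithConv (C →ₗ[R] Q)) :
    coactEnd ρ (f * g).ofConv = coactEnd ρ f.ofConv * coactEnd ρ g.ofConv := by
  refine end_eq_of_commute_mulRight (commute_coactEnd_mulRight ρ _) (fun x ↦
    (commute_coactEnd_mulRight ρ _ x).mul_left (commute_coactEnd_mulRight ρ _ x)) fun m ↦ ?_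
  rw [Module.End.mul_apply, coactEnd_tmul_one, coactEnd_tmul_one, coactEnd_lTensor, hρ.coassoc,
    ← LinearMap.lTensor_comp_apply]
  rfl

/-- The representation on `M ⊗ Q` of the convolution algebra of maps `C → Q` given by a
coaction of `C` on `M`. -/
def IsCoaction.convRep (hρ : IsCoaction ρ) :
    WithConv (C →ₗ[R] Q) →* Module.End R (M ⊗[R] Q) where
  toFun f := coactEnd ρ f.ofConv
  map_one' := hρ.coactEnd_one
  map_mul' := hρ.coactEnd_mul

end Coaction

section CoactionOnEnd

variable {k H M : Type} [Field k] [Ring H] [HopfAlgebra k H] [AddCommGroup M] [Module k M]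
  {ρ : M →ₗ[k] M ⊗[k] H} {Q : Type*} [Semiring Q] [Algebra k Q]

/-- The invertible operator `m ⊗ x ↦ m₍₀₎ ⊗ φ(m₍₁₎) x` on `M ⊗ Q` given by a right `H`-coaction
on `M` and an algebra map `φ : H → Q`. -/
def IsCoaction.conjugator (hρ : IsCoaction ρ) (φ : H →ₐ[k] Q) : (Module.End k (M ⊗[k] Q))ˣ :=
  Units.map hρ.convRep (convUnit φ)

theorem IsCoaction.val_conjugator (hρ : IsCoaction ρ) (φ : H →ₐ[k] Q) :
    (hρ.conjugator φ : Module.End k (M ⊗[k] Q)) = coactEnd ρ φ.toLinearMap := rfl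

theorem IsCoaction.val_inv_conjugator (hρ : IsCoaction ρ) (φ : H →ₐ[k] Q) :
    (↑(hρ.conjugator φ)⁻¹ : Module.End k (M ⊗[k] Q)) =
      coactEnd ρ (φ.toLinearMap ∘ₗ HopfAlgebra.antipode k) := rfl

theorem IsCoaction.conjugator_counitAlgHom (hρ : IsCoaction ρ) :
    hρ.conjugator (Bialgebra.counitAlgHom k H) = 1 := by
  rw [IsCoaction.conjugator, convUnit_counitAlgHom, map_one]

theorem IsCoaction.conjugator_comulAlgHom (hρ : IsCoaction ρ) :
    hρ.conjugator (Bialgebra.comulAlgHom k H) =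
      hρ.conjugator Algebra.TensorProduct.includeLeft *
        hρ.conjugator Algebra.TensorProduct.includeRight := by
  rw [IsCoaction.conjugator, convUnit_comulAlgHom, map_mul]
  rfl

variable {δ : (Module.End k M)ᵐᵒᵖ →ₗ[k] (Module.End k M)ᵐᵒᵖ ⊗[k] H}

theorem opEndTensor_lTensor_coact (hρ : IsCoaction ρ) (hδ : EndOpCoactChar k H ρ δ)
    (φ : H →ₐ[k] Q) (u : (Module.End k M)ᵐᵒᵖ) :
    opEndTensor k M Q (φ.toLinearMap.lTensor _ (δ u)) =
      ↑(hρ.conjugator φ) * u.unop.rTensor Q * ↑(hρ.conjugator φ)⁻¹ := by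
  rw [hρ.val_conjugator, hρ.val_inv_conjugator]
  have commute_rTensor (x : Q) :
      Commute (u.unop.rTensor Q) ((LinearMap.mulRight k x).lTensor M) := by
    ext; simp
  refine end_eq_of_commute_mulRight (commute_opEndTensor_mulRight _) (fun x ↦
    ((commute_coactEnd_mulRight ρ _ x).mul_left (commute_rTensor x)).mul_left
      (commute_coactEnd_mulRight ρ _ x)) fun m ↦ ?_
  obtain ⟨t, m₀, m₁, hm⟩ := exists_finset_nat_tmul (ρ m)
  choose r n₀ n₁ hn using fun j ↦ exists_finset_nat_tmul (ρ (u.unop (m₀ j)))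
  have eval_coact : (evalOp k M m).rTensor H (δ u) =
      ∑ j ∈ t, ∑ l ∈ r j, n₀ j l ⊗ₜ[k] (n₁ j l * HopfAlgebra.antipode k (m₁ j)) :=
    hδ u m t m₀ m₁ r n₀ n₁ hm fun j _ ↦ hn j
  rw [opEndTensor_lTensor_apply_tmul_one, opEndTensor_apply_tmul_one, eval_coact]
  simp [coactEnd_tmul_of_eq_sum ρ hm, coactEnd_tmul_of_eq_sum ρ (hn _)]

theorem opEndTensor_coact (hρ : IsCoaction ρ) (hδ : EndOpCoactChar k H ρ δ)
    (u : (Module.End k M)ᵐᵒᵖ) :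
    opEndTensor k M H (δ u) =
      ↑(hρ.conjugator (.id k H)) * u.unop.rTensor H * ↑(hρ.conjugator (.id k H))⁻¹ := by
  simpa using opEndTensor_lTensor_coact hρ hδ (.id k H) u

theorem opEndTensor_tmul_tmul {Q₁ Q₂ : Type*} [Semiring Q₁] [Algebra k Q₁] [Semiring Q₂]
    [Algebra k Q₂] (X : (Module.End k M)ᵐᵒᵖ ⊗[k] Q₁) (q : Q₂) :
    opEndTensor k M (Q₁ ⊗[k] Q₂) (TensorProduct.assoc k _ Q₁ Q₂ (X ⊗ₜ q)) =
      opEndTensor k M (Q₁ ⊗[k] Q₂)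
        ((Algebra.TensorProduct.includeLeft (R := k) (S := k)).toLinearMap.lTensor _ X) *
          (LinearMap.mulLeft k (1 ⊗ₜ q)).lTensor M := by
  induction X with
  | zero => simp
  | add X Y hX hY => simp only [TensorProduct.add_tmul, map_add, add_mul, hX, hY]
  | tmul u p => ext; simp [opEndTensor_tmul]

theorem opEndTensor_rTensor_coact (hρ : IsCoaction ρ)
    (hδ : EndOpCoactChar k H ρ δ) (X : (Module.End k M)ᵐᵒᵖ ⊗[k] Q) :
    opEndTensor k M (H ⊗[k] Q) (TensorProduct.assoc k _ H Q (δ.rTensor Q X)) =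
      ↑(hρ.conjugator (Algebra.TensorProduct.includeLeft (R := k) (S := k) (B := Q))) *
        opEndTensor k M (H ⊗[k] Q)
          (Algebra.TensorProduct.includeRight.toLinearMap.lTensor _ X) *
        ↑(hρ.conjugator (Algebra.TensorProduct.includeLeft (R := k) (S := k) (B := Q)))⁻¹ := by
  induction X with
  | zero => simp
  | add X Y hX hY => simp only [map_add, mul_add, add_mul, hX, hY]
  | tmul u q =>
    have commute_mulLeft : Commute
        (hρ.conjugator (Algebra.TensorProduct.includeLeft (R := k) (S := k) (B := Q)))⁻¹.val
        ((LinearMap.mulLeft k ((1 : H) ⊗ₜ[k] q)).lTensor M) := by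
      rw [hρ.val_inv_conjugator]
      exact commute_coactEnd_mulLeft ρ fun h ↦ by simp [Commute, SemiconjBy]
    have map_eq_mul : opEndTensor k M (H ⊗[k] Q) (u ⊗ₜ ((1 : H) ⊗ₜ[k] q)) =
        u.unop.rTensor (H ⊗[k] Q) * (LinearMap.mulLeft k ((1 : H) ⊗ₜ[k] q)).lTensor M :=
      (LinearMap.rTensor_comp_lTensor ..).symm
    rw [LinearMap.rTensor_tmul, opEndTensor_tmul_tmul, opEndTensor_lTensor_coact hρ hδ,
      LinearMap.lTensor_tmul]
    simp only [AlgHom.toLinearMap_apply, Algebra.TensorProduct.includeRight_apply, map_eq_mul,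
      mul_assoc, commute_mulLeft.eq]

theorem EndOpCoactChar.isCoaction (hρ : IsCoaction ρ) (hδ : EndOpCoactChar k H ρ δ) :
    IsCoaction δ where
  coassoc u := by
    apply opEndTensor_injective
    symm
    calc opEndTensor k M (H ⊗[k] H) (comul.lTensor _ (δ u))
      _ = ↑(hρ.conjugator (Bialgebra.comulAlgHom k H)) * u.unop.rTensor (H ⊗[k] H) *
            ↑(hρ.conjugator (Bialgebra.comulAlgHom k H))⁻¹ :=
        opEndTensor_lTensor_coact hρ hδ (Bialgebra.comulAlgHom k H) u
      _ = ↑(hρ.conjugator (Algebra.TensorProduct.includeLeft (R := k) (S := k) (B := H))) *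
            opEndTensor k M (H ⊗[k] H)
              (Algebra.TensorProduct.includeRight.toLinearMap.lTensor _ (δ u)) *
            ↑(hρ.conjugator (Algebra.TensorProduct.includeLeft (R := k) (S := k) (B := H)))⁻¹ := by
        simp only [hρ.conjugator_comulAlgHom, opEndTensor_lTensor_coact hρ hδ, mul_inv_rev,
          Units.val_mul, mul_assoc]
      _ = opEndTensor k M (H ⊗[k] H) (TensorProduct.assoc k _ H H (δ.rTensor H (δ u))) :=
        (opEndTensor_rTensor_coact hρ hδ (δ u)).symm
  rid_lTensor_counit u := by
    have lTensor_counit : counit.lTensor _ (δ u) = u ⊗ₜ (1 : k) := by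
      apply opEndTensor_injective
      calc opEndTensor k M k (counit.lTensor _ (δ u))
        _ = ↑(hρ.conjugator (Bialgebra.counitAlgHom k H)) * u.unop.rTensor k *
              ↑(hρ.conjugator (Bialgebra.counitAlgHom k H))⁻¹ :=
          opEndTensor_lTensor_coact hρ hδ (Bialgebra.counitAlgHom k H) u
        _ = opEndTensor k M k (u ⊗ₜ 1) := by
          simp [hρ.conjugator_counitAlgHom, opEndTensor_tmul_one]
    rw [lTensor_counit, TensorProduct.rid_tmul, one_smul]

theorem EndOpCoactChar.coact_one (hρ : IsCoaction ρ) (hδ : EndOpCoactChar k H ρ δ) :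
    δ 1 = 1 ⊗ₜ 1 := by
  apply opEndTensor_injective
  have rTensor_one : (1 : Module.End k M).rTensor H = 1 := LinearMap.rTensor_id H M
  simp [opEndTensor_coact hρ hδ, opEndTensor_tmul_one, rTensor_one]

theorem EndOpCoactChar.coact_mul (hρ : IsCoaction ρ) (hδ : EndOpCoactChar k H ρ δ) {ι κ : Type*}
    {u v : (Module.End k M)ᵐᵒᵖ} {s : Finset ι} {t : Finset κ} {u₀ : ι → (Module.End k M)ᵐᵒᵖ}
    {u₁ : ι → H} {v₀ : κ → (Module.End k M)ᵐᵒᵖ} {v₁ : κ → H}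
    (hu : δ u = ∑ i ∈ s, u₀ i ⊗ₜ u₁ i) (hv : δ v = ∑ j ∈ t, v₀ j ⊗ₜ v₁ j) :
    δ (u * v) = ∑ i ∈ s, ∑ j ∈ t, (u₀ i * v₀ j) ⊗ₜ (v₁ j * u₁ i) := by
  apply opEndTensor_injective
  calc opEndTensor k M H (δ (u * v))
    _ = opEndTensor k M H (δ v) * opEndTensor k M H (δ u) := by
      simp [opEndTensor_coact hρ hδ, LinearMap.rTensor_mul, mul_assoc]
    _ = _ := by
      rw [hu, hv, map_sum, map_sum, Finset.sum_mul_sum, Finset.sum_comm]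
      simp [opEndTensor_tmul, LinearMap.mulLeft_mul, TensorProduct.map_comp,
        Module.End.mul_eq_comp]

end CoactionOnEnd

section Restriction

theorem rTensor_comul_comul_map {R C D : Type*} [CommSemiring R] [AddCommMonoid C] [Module R C]
    [Coalgebra R C] [AddCommMonoid D] [Module R D] [Coalgebra R D] (f : C →ₗc[R] D) (c : C) :
    comul.rTensor D (comul (f c)) =
      TensorProduct.map (TensorProduct.map f.toLinearMap f.toLinearMap) f.toLinearMap
        (comul.rTensor C (comul c)) := by
  rw [← CoalgHomClass.map_comp_comul_apply f, LinearMap.rTensor_map, LinearMap.map_rTensor]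
  exact congr(TensorProduct.map $(f.map_comp_comul.symm) _ _)

theorem bialgHom_map_antipode {R A B : Type*} [CommSemiring R] [Semiring A] [HopfAlgebra R A]
    [Semiring B] [HopfAlgebra R B] (f : A →ₐc[R] B) (a : A) :
    f (HopfAlgebra.antipode R a) = HopfAlgebra.antipode R (f a) := by
  have antipode_mul : toConv (HopfAlgebra.antipode R ∘ₗ (f : A →ₐ[R] B).toLinearMap) *
      (convUnit (f : A →ₐ[R] B)).val = 1 := by
    ext a
    simpa [convUnit, (ℛ R a).convMul_apply] using
      HopfAlgebra.sum_antipode_mul_eq_algebraMap_counit ((ℛ R a).induced f)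
  have inv_eq := left_inv_eq_right_inv antipode_mul (convUnit (f : A →ₐ[R] B)).val_inv
  exact congr($(inv_eq).ofConv a).symm

variable {k H M : Type} [Field k] [Ring H] [HopfAlgebra k H] [AddCommGroup M] [Module k M]

/-- A Hopf algebra automorphism in the sense of `IsHopfAut` as a bundled bialgebra
equivalence. -/
def IsHopfAut.toBialgEquiv {φ : H ≃ₗ[k] H} (hφ : IsHopfAut k H φ) : H ≃ₐc[k] H :=
  .ofAlgEquiv (.ofLinearEquiv φ hφ.2.1 hφ.1) (AlgHom.ext hφ.2.2.2)
    (AlgHom.ext fun h ↦ (hφ.2.2.1 h).symm)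

theorem IsYD.restrict {Sinv α β : H → H} (hS : IsAntipodeInv k H Sinv)
    {act : H →ₗ[k] M →ₗ[k] M} {ρ : M →ₗ[k] M ⊗[k] H} (hM : IsYD k H Sinv α β act ρ)
    (f : H →ₐc[k] H) :
    IsYD k H Sinv (α ∘ f) (β ∘ f) (act ∘ₗ (f : H →ₐ[k] H).toLinearMap) ρ := by
  obtain ⟨act_one, act_mul, coassoc, rid_counit, compat⟩ := hM
  have map_Sinv (h : H) : f (Sinv h) = Sinv (f h) := by
    rw [← hS.2 (f (Sinv h)), ← bialgHom_map_antipode, hS.1]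
  refine ⟨by simp [act_one], by simp [act_mul], coassoc, rid_counit,
    fun h m s t a b c m₀ m₁ hh hm ↦ ?_⟩
  have hfh : comul.rTensor H (comul (f h)) = ∑ i ∈ s, (f (a i) ⊗ₜ[k] f (b i)) ⊗ₜ[k] f (c i) := by
    have map_comul := rTensor_comul_comul_map (f : H →ₗc[k] H) h
    simpa [hh] using map_comul
  simpa [map_Sinv] using compat (f h) m s t _ _ _ m₀ m₁ hfh hm

end Restriction

section ConvolutionConjugation

variable {R C B : Type*} [CommSemiring R] [AddCommMonoid C] [Module R C] [Coalgebra R C]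
  [Semiring B] [Algebra R B]

theorem conj_convConst_mul_apply (x : (WithConv (C →ₗ[R] B))ˣ) (a b : B) {ι : Type*} {c : C}
    {s : Finset ι} {p q : ι → C} (hc : comul c = ∑ i ∈ s, p i ⊗ₜ[R] q i) :
    (↑x⁻¹ * convConst R C (a * b) * ↑x) c =
      ∑ i ∈ s, (↑x⁻¹ * convConst R C a * ↑x) (p i) * (↑x⁻¹ * convConst R C b * ↑x) (q i) := by
  rw [← convMul_apply_of_comul_eq_sum hc]
  simp [mul_assoc]

theorem conj_convConst_one_apply (x : (WithConv (C →ₗ[R] B))ˣ) (c : C) :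
    (↑x⁻¹ * convConst R C (1 : B) * ↑x) c = counit (R := R) c • 1 := by
  simp [Algebra.algebraMap_eq_smul_one]

theorem conj_convConst_apply_of_comul_eq_sum (x : (WithConv (C →ₗ[R] B))ˣ) (b : B) {ι : Type*}
    {c : C} {s : Finset ι} {p q : ι → C} (hc : comul c = ∑ i ∈ s, p i ⊗ₜ[R] q i) :
    (↑x⁻¹ * convConst R C b * ↑x) c = ∑ i ∈ s, x⁻¹.val (p i) * b * x.val (q i) := by
  simp only [convMul_apply_of_comul_eq_sum hc, mul_convConst_apply]

end ConvolutionConjugation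

theorem conj_eq_conj_of_eq_mul {G : Type*} [Monoid G] {x y : Gˣ} {c u : G} (hx : ↑x = c * ↑y)
    (hc : Commute c u) : ↑x⁻¹ * u * ↑x = ↑y⁻¹ * u * ↑y := by
  have inv_mul : ↑x⁻¹ * c = (↑y⁻¹ : G) := by
    rw [← one_mul (↑y⁻¹ : G), Units.eq_mul_inv_iff_mul_eq, mul_assoc, ← hx, Units.inv_mul]
  rw [hx, ← mul_assoc, mul_assoc _ u, ← hc.eq, ← mul_assoc, inv_mul]

section ActionOnEnd

variable {k H M : Type} [Field k] [Ring H] [HopfAlgebra k H] [AddCommGroup M] [Module k M]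
  {Sinv : H → H} (hS : IsAntipodeInv k H Sinv) {F : H →ₐ[k] Module.End k M}
  {act : H →ₗ[k] (Module.End k M)ᵐᵒᵖ →ₗ[k] (Module.End k M)ᵐᵒᵖ}

include hS

theorem EndOpActChar.act_eq_conj_apply (hact : EndOpActChar k H id Sinv F.toLinearMap act) (h : H)
    (u : (Module.End k M)ᵐᵒᵖ) :
    act h u = (↑(convOpUnit hS F)⁻¹ * convConst k H u * ↑(convOpUnit hS F)) h := by
  obtain ⟨s, p, q, hh⟩ := exists_finset_nat_tmul (comul (R := k) h)
  rw [conj_convConst_apply_of_comul_eq_sum _ _ hh]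
  refine unop_injective (LinearMap.ext fun m ↦ ?_)
  rw [hact h u m s p q hh]
  simp [val_convOpUnit_apply, val_inv_convOpUnit_apply]

theorem EndOpActChar.act_one_apply (hact : EndOpActChar k H id Sinv F.toLinearMap act)
    (u : (Module.End k M)ᵐᵒᵖ) : act 1 u = u := by
  have comul_one : comul (R := k) (1 : H) = ∑ _i ∈ Finset.range 1, 1 ⊗ₜ 1 := by
    simp [Algebra.TensorProduct.one_def]
  rw [hact.act_eq_conj_apply hS, conj_convConst_apply_of_comul_eq_sum _ _ comul_one]
  simp [val_convOpUnit_apply, val_inv_convOpUnit_apply, antipodeInv_one hS]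

theorem EndOpActChar.act_mul_apply (hact : EndOpActChar k H id Sinv F.toLinearMap act) (g h : H)
    (u : (Module.End k M)ᵐᵒᵖ) : act (g * h) u = act g (act h u) := by
  rw [hact.act_eq_conj_apply hS, hact.act_eq_conj_apply hS, hact.act_eq_conj_apply hS,
    conj_convConst_apply_of_comul_eq_sum _ _ ((ℛ k g).mul (ℛ k h)).eq.symm,
    conj_convConst_apply_of_comul_eq_sum _ _ (ℛ k g).eq.symm,
    conj_convConst_apply_of_comul_eq_sum _ _ (ℛ k h).eq.symm]
  simp [Finset.sum_product, val_convOpUnit_apply, val_inv_convOpUnit_apply, antipodeInv_mul hS,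
    Finset.mul_sum, Finset.sum_mul, mul_assoc, Coalgebra.Repr.mul]

variable (F) in
/-- The convolution unit `h ↦ F(h) ⊗ id`, with values in `End(M ⊗ Q)ᵒᵖ`. -/
def actConjugator (Q : Type*) [Semiring Q] [Algebra k Q] :
    (WithConv (H →ₗ[k] (Module.End k (M ⊗[k] Q))ᵐᵒᵖ))ˣ :=
  convOpUnit hS ((Module.End.rTensorAlgHom k M Q).comp F)

theorem val_actConjugator_apply {Q : Type*} [Semiring Q] [Algebra k Q] (h : H) :
    (actConjugator hS F Q).val h = op ((F h).rTensor Q) := rfl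

theorem val_inv_actConjugator_apply {Q : Type*} [Semiring Q] [Algebra k Q] (h : H) :
    (actConjugator hS F Q)⁻¹.val h = op ((F (Sinv h)).rTensor Q) := rfl

theorem conj_convConst_opEndTensor_apply (hact : EndOpActChar k H id Sinv F.toLinearMap act)
    {Q : Type*} [Semiring Q] [Algebra k Q] (X : (Module.End k M)ᵐᵒᵖ ⊗[k] Q) (h : H) :
    (↑(actConjugator hS F Q)⁻¹ * convConst k H (op (opEndTensor k M Q X)) *
        ↑(actConjugator hS F Q)) h =
      op (opEndTensor k M Q ((act h).rTensor Q X)) := by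
  rw [conj_convConst_apply_of_comul_eq_sum _ _ (ℛ k h).eq.symm]
  induction X with
  | zero => simp
  | add X Y hX hY => simp only [map_add, op_add, mul_add, add_mul, Finset.sum_add_distrib, hX, hY]
  | tmul u q =>
    rw [LinearMap.rTensor_tmul, hact.act_eq_conj_apply hS,
      conj_convConst_apply_of_comul_eq_sum _ _ (ℛ k h).eq.symm]
    simp only [val_convOpUnit_apply, val_inv_convOpUnit_apply, val_actConjugator_apply,
      val_inv_actConjugator_apply, TensorProduct.sum_tmul, map_sum, Finset.op_sum]
    refine Finset.sum_congr rfl fun i _ ↦ unop_injective ?_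
    ext m x
    simp [opEndTensor_tmul]

end ActionOnEnd

section Compatibility

variable {k H M : Type} [Field k] [Ring H] [HopfAlgebra k H] [AddCommGroup M] [Module k M]
  {Sinv : H → H} {F : H →ₐ[k] Module.End k M} {ρ : M →ₗ[k] M ⊗[k] H} {α : H →ₗ[k] H}

/-- The convolution unit given by the constant operator `m ⊗ x ↦ m₍₀₎ ⊗ m₍₁₎ x` of `M ⊗ H`. -/
def IsCoaction.coactConjugator (hρ : IsCoaction ρ) :
    (WithConv (H →ₗ[k] (Module.End k (M ⊗[k] H))ᵐᵒᵖ))ˣ :=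
  Units.map (convConst k H).toMonoidHom (Units.opEquiv.symm (op (hρ.conjugator (.id k H))))

theorem IsCoaction.val_coactConjugator (hρ : IsCoaction ρ) :
    hρ.coactConjugator.val = convConst k H (op (hρ.conjugator (.id k H)).val) := rfl

theorem IsCoaction.val_inv_coactConjugator (hρ : IsCoaction ρ) :
    hρ.coactConjugator⁻¹.val = convConst k H (op (hρ.conjugator (.id k H))⁻¹.val) := rfl

theorem coactConjugator_conj (hρ : IsCoaction ρ)
    {δ : (Module.End k M)ᵐᵒᵖ →ₗ[k] (Module.End k M)ᵐᵒᵖ ⊗[k] H}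
    (hδ : EndOpCoactChar k H ρ δ) (u : (Module.End k M)ᵐᵒᵖ) :
    hρ.coactConjugator⁻¹.val * convConst k H (op (opEndTensor k M H (u ⊗ₜ 1))) *
      hρ.coactConjugator.val = convConst k H (op (opEndTensor k M H (δ u))) := by
  rw [opEndTensor_coact hρ hδ, opEndTensor_tmul_one, hρ.val_coactConjugator,
    hρ.val_inv_coactConjugator, ← map_mul, ← map_mul, ← op_mul, ← op_mul, mul_assoc]

theorem coactEnd_mul_rTensor_eq_sum (hM : IsYD k H Sinv α id F.toLinearMap ρ) {h : H}
    {s : Finset ℕ} {a b c : ℕ → H}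
    (hh : comul.rTensor H (comul (R := k) h) = ∑ i ∈ s, (a i ⊗ₜ[k] b i) ⊗ₜ[k] c i) :
    coactEnd ρ .id * (F h).rTensor H = ∑ i ∈ s,
      (LinearMap.mulLeft k (c i)).lTensor M * ((F (b i)).rTensor H * coactEnd ρ .id) *
        (LinearMap.mulLeft k (α (Sinv (a i)))).lTensor M := by
  ext m x
  obtain ⟨t, m₀, m₁, hm⟩ := exists_finset_nat_tmul (ρ m)
  have coact_apply : ρ (F h m) = ∑ i ∈ s ×ˢ t,
      F (b i.1) (m₀ i.2) ⊗ₜ (c i.1 * m₁ i.2 * α (Sinv (a i.1))) :=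
    (hM.2.2.2.2 h m s t a b c m₀ m₁ hh hm).trans (Finset.sum_product' ..).symm
  simp [coactEnd_tmul_of_eq_sum ρ coact_apply, coactEnd_tmul_of_eq_sum ρ hm, Finset.sum_product,
    mul_assoc]

theorem mulLeft_mul_opEndTensor_mul_mulLeft (u : (Module.End k M)ᵐᵒᵖ) (x y z : H) :
    (LinearMap.mulLeft k x).lTensor M * opEndTensor k M H (u ⊗ₜ y) *
      (LinearMap.mulLeft k z).lTensor M = opEndTensor k M H (u ⊗ₜ (x * y * z)) := by
  ext
  simp [opEndTensor_tmul, mul_assoc]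

variable (hS : IsAntipodeInv k H Sinv)

variable (M) in
/-- The convolution unit `h ↦ id ⊗ (h · )`, with values in `End(M ⊗ H)ᵒᵖ`. -/
def mulConjugator : (WithConv (H →ₗ[k] (Module.End k (M ⊗[k] H))ᵐᵒᵖ))ˣ :=
  convOpUnit hS ((Module.End.lTensorAlgHom k H M).comp (Algebra.lmul k H))

theorem val_mulConjugator_apply (h : H) :
    (mulConjugator M hS).val h = op ((LinearMap.mulLeft k h).lTensor M) := rfl

theorem val_inv_mulConjugator_apply (h : H) :
    (mulConjugator M hS)⁻¹.val h = op ((LinearMap.mulLeft k (Sinv h)).lTensor M) := rfl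

theorem conj_mulConjugator_apply (f : WithConv (H →ₗ[k] (Module.End k (M ⊗[k] H))ᵐᵒᵖ)) {h : H}
    {s : Finset ℕ} {a b c : ℕ → H}
    (hh : comul.rTensor H (comul (R := k) h) = ∑ i ∈ s, (a i ⊗ₜ[k] b i) ⊗ₜ[k] c i) :
    ((mulConjugator M hS)⁻¹.val * f * (mulConjugator M hS).val) h = ∑ i ∈ s,
      op ((LinearMap.mulLeft k (c i)).lTensor M * unop (f (b i)) *
        (LinearMap.mulLeft k (Sinv (a i))).lTensor M) := by
  rw [convMul_convMul_apply_of_rTensor_comul_eq_sum hh]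
  simp [val_inv_mulConjugator_apply, val_mulConjugator_apply, mul_assoc]

variable (M) in
/-- The convolution element `h ↦ id ⊗ (α(S⁻¹(h)) · )`, with values in `End(M ⊗ H)ᵒᵖ`. -/
def twist (α : H →ₗ[k] H) : WithConv (H →ₗ[k] (Module.End k (M ⊗[k] H))ᵐᵒᵖ) :=
  toConv ((opLinearEquiv k).toLinearMap ∘ₗ LinearMap.lTensorHom M ∘ₗ LinearMap.mul k H ∘ₗ α ∘ₗ
    (antipodeEquiv hS).symm.toLinearMap)

theorem twist_apply (h : H) :
    twist M hS α h = op ((LinearMap.mulLeft k (α (Sinv h))).lTensor M) := rfl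

theorem commute_twist (u : (Module.End k M)ᵐᵒᵖ) :
    Commute (twist M hS α) (convConst k H (op (opEndTensor k M H (u ⊗ₜ 1)))) := by
  ext h
  refine (mul_convConst_apply ..).trans (Eq.trans ?_ (convConst_mul_apply ..).symm)
  rw [twist_apply, ← op_mul, ← op_mul]
  congr 1
  ext
  simp [opEndTensor_tmul]

theorem actConjugator_mul_coactConjugator (hρ : IsCoaction ρ)
    (hM : IsYD k H Sinv α id F.toLinearMap ρ) :
    (actConjugator hS F H * hρ.coactConjugator).val =
      twist M hS α *
        (hρ.coactConjugator * actConjugator hS F H * mulConjugator M hS).val := by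
  ext h
  obtain ⟨s, a, b, c, hh⟩ := exists_finset_nat_tmul_tmul (comul.rTensor H (comul (R := k) h))
  calc (actConjugator hS F H * hρ.coactConjugator).val h
    _ = op (coactEnd ρ .id * (F h).rTensor H) := mul_convConst_apply ..
    _ = ∑ i ∈ s, op ((LinearMap.mulLeft k (c i)).lTensor M * ((F (b i)).rTensor H *
          coactEnd ρ .id) * (LinearMap.mulLeft k (α (Sinv (a i)))).lTensor M) := by
      rw [coactEnd_mul_rTensor_eq_sum hM hh, Finset.op_sum]
    _ = (twist M hS α *
          (hρ.coactConjugator * actConjugator hS F H * mulConjugator M hS).val) h := by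
      rw [Units.val_mul, ← mul_assoc, convMul_convMul_apply_of_rTensor_comul_eq_sum hh]
      simp only [Units.val_mul, hρ.val_coactConjugator, convConst_mul_apply, twist_apply,
        val_actConjugator_apply, val_mulConjugator_apply, ← op_mul, hρ.val_conjugator, mul_assoc]
      rfl

variable {act : H →ₗ[k] (Module.End k M)ᵐᵒᵖ →ₗ[k] (Module.End k M)ᵐᵒᵖ}
  {δ : (Module.End k M)ᵐᵒᵖ →ₗ[k] (Module.End k M)ᵐᵒᵖ ⊗[k] H}

include hS

theorem conj_actConjugator_mul_coactConjugator_apply (hρ : IsCoaction ρ)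
    (hδ : EndOpCoactChar k H ρ δ) (hact : EndOpActChar k H id Sinv F.toLinearMap act) (h : H)
    (u : (Module.End k M)ᵐᵒᵖ) :
    ((actConjugator hS F H * hρ.coactConjugator)⁻¹.val *
        convConst k H (op (opEndTensor k M H (u ⊗ₜ[k] 1))) *
        (actConjugator hS F H * hρ.coactConjugator).val) h =
      op (opEndTensor k M H (δ (act h u))) := by
  have conj_act := conj_convConst_opEndTensor_apply hS hact (u ⊗ₜ[k] (1 : H)) h
  simp only [mul_inv_rev, Units.val_mul, hρ.val_coactConjugator, hρ.val_inv_coactConjugator,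
    mul_assoc, convConst_mul_apply] at conj_act ⊢
  rw [← mul_assoc, ← mul_assoc, mul_convConst_apply, mul_assoc, conj_act]
  simp [opEndTensor_coact hρ hδ, opEndTensor_tmul_one, mul_assoc]

theorem EndOpCoactChar.coact_act (hρ : IsCoaction ρ) (hM : IsYD k H Sinv α id F.toLinearMap ρ)
    (hδ : EndOpCoactChar k H ρ δ) (hact : EndOpActChar k H id Sinv F.toLinearMap act)
    {h : H} {u : (Module.End k M)ᵐᵒᵖ}
    {s t : Finset ℕ} {a b c : ℕ → H} {u₀ : ℕ → (Module.End k M)ᵐᵒᵖ} {u₁ : ℕ → H}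
    (hh : comul.rTensor H (comul (R := k) h) = ∑ i ∈ s, (a i ⊗ₜ[k] b i) ⊗ₜ[k] c i)
    (hu : δ u = ∑ j ∈ t, u₀ j ⊗ₜ u₁ j) :
    δ (act h u) = ∑ i ∈ s, ∑ j ∈ t, act (b i) (u₀ j) ⊗ₜ (c i * u₁ j * Sinv (a i)) := by
  apply opEndTensor_injective
  apply op_injective
  let x := actConjugator hS F H
  let y := mulConjugator M hS
  let w := hρ.coactConjugator
  let v := convConst k H (op (opEndTensor k M H (u ⊗ₜ[k] 1)))
  calc op (opEndTensor k M H (δ (act h u)))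
    _ = ((x * w)⁻¹.val * v * (x * w).val) h :=
      (conj_actConjugator_mul_coactConjugator_apply hS hρ hδ hact h u).symm
    _ = ((w * x * y)⁻¹.val * v * (w * x * y).val) h := by
      rw [conj_eq_conj_of_eq_mul (actConjugator_mul_coactConjugator hS hρ hM)
        (commute_twist hS u)]
    _ = (y⁻¹.val * (x⁻¹.val * (w⁻¹.val * v * w.val) * x.val) * y.val) h := by
      simp only [mul_inv_rev, Units.val_mul, mul_assoc]
    _ = op (opEndTensor k M H
          (∑ i ∈ s, ∑ j ∈ t, act (b i) (u₀ j) ⊗ₜ (c i * u₁ j * Sinv (a i)))) := by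
      rw [coactConjugator_conj hρ hδ, conj_mulConjugator_apply hS _ hh]
      simp only [x, conj_convConst_opEndTensor_apply hS hact, unop_op]
      simp only [hu, map_sum, LinearMap.rTensor_tmul, Finset.mul_sum, Finset.sum_mul,
        mulLeft_mul_opEndTensor_mul_mulLeft, Finset.op_sum]

end Compatibility

section OppositeEndomorphismAlgebra

variable {k H M : Type} [Field k] [Ring H] [HopfAlgebra k H] [AddCommGroup M] [Module k M]
  {Sinv α β : H → H} {actM : H →ₗ[k] M →ₗ[k] M} {ρ : M →ₗ[k] M ⊗[k] H}

theorem IsYD.isCoaction (hM : IsYD k H Sinv α β actM ρ) : IsCoaction ρ where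
  coassoc m := by rw [hM.2.2.1 m, LinearEquiv.apply_symm_apply]
  rid_lTensor_counit := hM.2.2.2.1

/-- The action of a Yetter-Drinfeld module as an algebra map to its endomorphism algebra. -/
def IsYD.toAlgHom (hM : IsYD k H Sinv α β actM ρ) : H →ₐ[k] Module.End k M :=
  .ofLinearMap actM (LinearMap.ext hM.1) fun g h ↦ LinearMap.ext (hM.2.1 g h)

variable {actO : H →ₗ[k] (Module.End k M)ᵐᵒᵖ →ₗ[k] (Module.End k M)ᵐᵒᵖ}
  {δ : (Module.End k M)ᵐᵒᵖ →ₗ[k] (Module.End k M)ᵐᵒᵖ ⊗[k] H}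

theorem isYDAlgebra_opEnd (hS : IsAntipodeInv k H Sinv) {α : H →ₗ[k] H}
    (hM : IsYD k H Sinv α id actM ρ) (hactO : EndOpActChar k H id Sinv actM actO)
    (hδ : EndOpCoactChar k H ρ δ) : IsYDAlgebra k H Sinv actO δ := by
  have hρ : IsCoaction ρ := hM.isCoaction
  have hδ' : IsCoaction δ := hδ.isCoaction hρ
  have hact : EndOpActChar k H id Sinv hM.toAlgHom.toLinearMap actO := hactO
  refine ⟨⟨hact.act_one_apply hS, hact.act_mul_apply hS, fun u ↦ ?_, hδ'.rid_lTensor_counit, ?_⟩,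
    ?_, fun h ↦ ?_, hδ.coact_one hρ, ?_⟩
  · rw [← hδ'.coassoc, LinearEquiv.symm_apply_apply]
  · intro h u s t a b c u₀ u₁ hh hu
    exact hδ.coact_act (F := hM.toAlgHom) hS hρ hM hact hh hu
  · intro h u v s p q hh
    simpa only [hact.act_eq_conj_apply hS] using conj_convConst_mul_apply _ u v hh
  · rw [hact.act_eq_conj_apply hS, conj_convConst_one_apply]
  · intro u v s t u₀ u₁ v₀ v₁ hu hv
    exact hδ.coact_mul hρ hu hv

end OppositeEndomorphismAlgebra

end GYD

theorem statement_8_general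
    (k H : Type) [Field k] [Ring H] [HopfAlgebra k H]
    (Sinv : H → H) (hS : GYD.IsAntipodeInv k H Sinv)
    (α : H →ₗ[k] H) (β : H ≃ₗ[k] H) (hβ : GYD.IsHopfAut k H β)
    (M : Type) [AddCommGroup M] [Module k M]
    (actM : H →ₗ[k] M →ₗ[k] M) (coactM : M →ₗ[k] M ⊗[k] H)
    (hM : GYD.IsYD k H Sinv ⇑α ⇑β actM coactM)
    (actO : H →ₗ[k] (Module.End k M)ᵐᵒᵖ →ₗ[k] (Module.End k M)ᵐᵒᵖ)
    (coactO : (Module.End k M)ᵐᵒᵖ →ₗ[k] (Module.End k M)ᵐᵒᵖ ⊗[k] H)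
    (hactO : GYD.EndOpActChar k H ⇑β.symm Sinv actM actO)
    (hcoactO : GYD.EndOpCoactChar k H coactM coactO) :
    GYD.IsYDAlgebra k H Sinv actO coactO := by
  let f : H →ₐc[k] H := hβ.toBialgEquiv.symm
  have comp_id : ⇑β ∘ f = id := funext β.apply_symm_apply
  have hM' := hM.restrict hS f
  rw [comp_id] at hM'
  exact GYD.isYDAlgebra_opEnd hS (α := α ∘ₗ β.symm.toLinearMap) hM' hactO hcoactO

theorem statement_8
    (k H : Type) [Field k] [Ring H] [HopfAlgebra k H]
    (Sinv : H → H) (hS : GYD.IsAntipodeInv k H Sinv)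
    (α β : H ≃ₗ[k] H)
    (hα : GYD.IsHopfAut k H α) (hβ : GYD.IsHopfAut k H β)
    (M : Type) [AddCommGroup M] [Module k M] [FiniteDimensional k M]
    (actM : H →ₗ[k] M →ₗ[k] M) (coactM : M →ₗ[k] M ⊗[k] H)
    (hM : GYD.IsYD k H Sinv ⇑α ⇑β actM coactM)
    (actO : H →ₗ[k] (Module.End k M)ᵐᵒᵖ →ₗ[k] (Module.End k M)ᵐᵒᵖ)
    (coactO : (Module.End k M)ᵐᵒᵖ →ₗ[k] (Module.End k M)ᵐᵒᵖ ⊗[k] H)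
    (hactO : GYD.EndOpActChar k H ⇑β.symm Sinv actM actO)
    (hcoactO : GYD.EndOpCoactChar k H coactM coactO) :
    GYD.IsYDAlgebra k H Sinv actO coactO :=
  statement_8_general k H Sinv hS α.toLinearMap β hβ M actM coactM hM actO coactO hactO hcoactO

end
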